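/- arXiv:1203.6495 — 5 statements merged into one kernel-verified Lean document; each statement's English description precedes it below -/
import Mathlib

section
/- Let V be a 6-dimensional complex vector space, A ⊆ ⋀³V a Lagrangian subspace, W ∈ Θ_A, and 0 ≠ v₀ ∈ W. Suppose V₀ is a 5-dimensional subspace with V = ℂv₀ ⊕ V₀ and A ∩ ⋀³V₀ = 0. Set W₀ = W ∩ V₀ (a 2-dimensional space) and choose a subspace U₀ ⊆ V₀ with V₀ = W₀ ⊕ U₀. Then the map α ↦ v₀∧α + q̃_A(α) restricts to a linear isomorphism from the radical of q_A restricted to W₀∧U₀ (i.e. {α ∈ W₀∧U₀ : q_A(α,β) = 0 for all β ∈ W₀∧U₀}) onto A ∩ (⋀²W∧U₀); consequently the dimension of this radical equals dim_ℂ(A ∩ (⋀²W∧V)) − 1. -/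
open Module ExteriorAlgebra

noncomputable section

variable {V : Type*} [AddCommGroup V] [Module ℂ V]

/-- The subspace `v ∧ ⋀²V` of `⋀³V`, inside the exterior algebra. -/
def vWedge2 (v : V) : Submodule ℂ (ExteriorAlgebra ℂ V) :=
  Submodule.map (LinearMap.mulLeft ℂ (ι ℂ v)) (⋀[ℂ]^2 V)

/-- The image of `⋀²W` in the exterior algebra, for a subspace `W ⊆ V`. -/
def wedge2 (W : Submodule ℂ V) : Submodule ℂ (ExteriorAlgebra ℂ V) :=
  Submodule.span ℂ {z | ∃ w₁ ∈ W, ∃ w₂ ∈ W, z = ι ℂ w₁ * ι ℂ w₂}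

/-- The image of `⋀³W` in the exterior algebra, for a subspace `W ⊆ V`. -/
def wedge3 (W : Submodule ℂ V) : Submodule ℂ (ExteriorAlgebra ℂ V) :=
  Submodule.span ℂ
    {z | ∃ w₁ ∈ W, ∃ w₂ ∈ W, ∃ w₃ ∈ W, z = ι ℂ w₁ * ι ℂ w₂ * ι ℂ w₃}

/-- The subspace `⋀²W ∧ V` for a subspace `W ⊆ V`, inside the exterior algebra. -/
def wedge2V (W : Submodule ℂ V) : Submodule ℂ (ExteriorAlgebra ℂ V) :=
  Submodule.span ℂ
    {z | ∃ w₁ ∈ W, ∃ w₂ ∈ W, ∃ u : V, z = ι ℂ w₁ * ι ℂ w₂ * ι ℂ u}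

/-- The subspace `⋀²W ∧ U₀` for subspaces `W, U₀ ⊆ V`, inside the exterior algebra. -/
def wedge2U (W U₀ : Submodule ℂ V) : Submodule ℂ (ExteriorAlgebra ℂ V) :=
  Submodule.span ℂ
    {z | ∃ w₁ ∈ W, ∃ w₂ ∈ W, ∃ u ∈ U₀, z = ι ℂ w₁ * ι ℂ w₂ * ι ℂ u}

/-- The subspace `W₀ ∧ U₀` (span of `w∧u`, `w ∈ W₀`, `u ∈ U₀`) inside the exterior algebra. -/
def mixedWedge (W₀ U₀ : Submodule ℂ V) : Submodule ℂ (ExteriorAlgebra ℂ V) :=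
  Submodule.span ℂ {z | ∃ w ∈ W₀, ∃ u ∈ U₀, z = ι ℂ w * ι ℂ u}

/-- The radical of the restriction to `S` of the form `q_A(α,β) = vol(v₀ ∧ α ∧ q̃_A(β))`,
where `qt` plays the role of `q̃_A`:  `{α ∈ S | ∀ β ∈ S, q_A(α,β) = 0}`. -/
def radOn (vol : ExteriorAlgebra ℂ V →ₗ[ℂ] ℂ) (v₀ : V)
    (qt : ExteriorAlgebra ℂ V →ₗ[ℂ] ExteriorAlgebra ℂ V)
    (S : Submodule ℂ (ExteriorAlgebra ℂ V)) : Submodule ℂ (ExteriorAlgebra ℂ V) :=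
  S ⊓ ⨅ β ∈ S,
    LinearMap.ker (vol ∘ₗ LinearMap.mulLeft ℂ (ι ℂ v₀) ∘ₗ LinearMap.mulRight ℂ (qt β))

end

/-!
Write `W = ℂv₀ ⊕ W₀`, so that `⋀²W ∧ U₀ = v₀ ∧ W₀ ∧ U₀ + ⋀²W₀ ∧ U₀`. Since `A ∩ ⋀³V₀ = 0`, an
element `v₀ ∧ α + γ` with `α ∈ ⋀²V₀` and `γ ∈ ⋀³V₀` lies in `A` only if `γ = q̃_A(α)`. Hence the
first claim says that `α ∈ W₀ ∧ U₀` lies in the radical if and only if `q̃_A(α) ∈ ⋀²W₀ ∧ U₀`. The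
"if" part holds because `⋀³W₀ = 0`. Conversely, `q̃_A` vanishes on `⋀²W₀`, as
`v₀ ∧ ⋀²W₀ ⊆ ⋀³W ⊆ A`, so by symmetry of `q_A` an `α` in the radical is orthogonal to all of
`W₀ ∧ V₀`. Thus `w ∧ q̃_A(α) = 0` for every `w ∈ W₀`, and dividing by a basis of `W₀` puts
`q̃_A(α)` in `⋀²W₀ ∧ V₀ = ⋀²W₀ ∧ U₀`.

For the dimension, `⋀²W ∧ V = ⋀³W ⊕ ⋀²W ∧ U₀`, and `A` contains the line `⋀³W`.

The spaces `⋀ⁿS` and `⋀ⁿS ∧ T` are the products `S.map ι ^ n` and `S.map ι ^ n * T.map ι` of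
submodules of the exterior algebra.
-/

theorem isCompl_of_inf_sup_eq {L : Type*} [Lattice L] [BoundedOrder L] {a b c : L}
    (hab : Codisjoint a b) (hdisj : Disjoint (a ⊓ b) c) (hsup : a ⊓ b ⊔ c = b) : IsCompl a c := by
  have hc : c ≤ b := le_sup_right.trans_eq hsup
  refine ⟨?_, ?_⟩
  · rw [disjoint_iff, ← inf_eq_right.2 hc, ← inf_assoc, hdisj.eq_bot]
  · rw [codisjoint_iff, ← hab.eq_top]
    calc a ⊔ c = a ⊔ (a ⊓ b ⊔ c) := by rw [← sup_assoc, sup_inf_self]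
      _ = a ⊔ b := by rw [hsup]

theorem finrank_map_of_injOn {R M N : Type*} [Semiring R] [AddCommMonoid M] [Module R M]
    [AddCommMonoid N] [Module R N] {f : M →ₗ[R] N} {S : Submodule R M} (hf : Set.InjOn f S) :
    finrank R (S.map f) = finrank R S := by
  rw [← LinearMap.range_domRestrict]
  exact LinearMap.finrank_range_of_inj (Set.injOn_iff_injective.1 hf)

section Products

variable {R M : Type*} [CommRing R] [AddCommGroup M] [Module R M]

theorem ι_mul_ι_eq_neg (v w : M) : ι R v * ι R w = -(ι R w * ι R v) :=
  eq_neg_of_add_eq_zero_left (ι_add_mul_swap v w)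

theorem map_ι_pow_le_exteriorPower (S : Submodule R M) (n : ℕ) :
    S.map (ι R) ^ n ≤ ⋀[R]^n M :=
  pow_le_pow_left' LinearMap.map_le_range n

theorem map_ι_pow_eq_map_exteriorPower (S : Submodule R M) (n : ℕ) :
    S.map (ι R) ^ n = (⋀[R]^n S).map (map S.subtype).toLinearMap := by
  rw [exteriorPower, Submodule.map_pow, ι_range_map_map, Submodule.range_subtype]

theorem ι_mul_mem_map_ι_pow {S : Submodule R M} {v : M} {n : ℕ} {x : ExteriorAlgebra R M}
    (hv : v ∈ S) (hx : x ∈ S.map (ι R) ^ n) : ι R v * x ∈ S.map (ι R) ^ (n + 1) := by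
  rw [pow_succ']
  exact Submodule.mul_mem_mul ⟨v, hv, rfl⟩ hx

theorem map_ι_mul_map_ι_le {S T U : Submodule R M} (hS : S ≤ U) (hT : T ≤ U) :
    S.map (ι R) * T.map (ι R) ≤ U.map (ι R) ^ 2 :=
  (mul_le_mul' (Submodule.map_mono hS) (Submodule.map_mono hT)).trans_eq (pow_two _).symm

theorem map_ι_pow_two_mul_map_ι_le {S T U : Submodule R M} (hS : S ≤ U) (hT : T ≤ U) :
    S.map (ι R) ^ 2 * T.map (ι R) ≤ U.map (ι R) ^ 3 := by
  rw [pow_succ _ 2]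
  exact mul_le_mul' (pow_le_pow_left' (Submodule.map_mono hS) 2) (Submodule.map_mono hT)

theorem commute_map_ι (S T : Submodule R M) : Commute (S.map (ι R)) (T.map (ι R)) := by
  have mul_le (S T : Submodule R M) :
      S.map (ι R) * T.map (ι R) ≤ T.map (ι R) * S.map (ι R) := by
    rw [Submodule.mul_le]
    rintro _ ⟨s, hs, rfl⟩ _ ⟨t, ht, rfl⟩
    rw [ι_mul_ι_eq_neg]
    exact neg_mem (Submodule.mul_mem_mul ⟨t, ht, rfl⟩ ⟨s, hs, rfl⟩)
  exact le_antisymm (mul_le S T) (mul_le T S)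

theorem ι_mul_eq_neg_one_pow_smul (v : M) {n : ℕ} {x : ExteriorAlgebra R M}
    (hx : x ∈ ⋀[R]^n M) : ι R v * x = (-1 : R) ^ n • (x * ι R v) := by
  induction hx using Submodule.pow_induction_on_left' with
  | algebraMap r => rw [pow_zero, one_smul, Algebra.commutes]
  | add x y n _ _ hx hy => rw [mul_add, hx, hy, add_mul, smul_add]
  | mem_mul m hm n x _ hx =>
    obtain ⟨w, rfl⟩ := hm
    rw [← mul_assoc, ι_mul_ι_eq_neg, neg_mul, mul_assoc, hx, mul_smul_comm, pow_succ,
      mul_neg_one, neg_smul, mul_assoc]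

theorem mul_eq_neg_one_pow_smul {m n : ℕ} {x y : ExteriorAlgebra R M} (hx : x ∈ ⋀[R]^m M)
    (hy : y ∈ ⋀[R]^n M) : x * y = (-1 : R) ^ (m * n) • (y * x) := by
  induction hx using Submodule.pow_induction_on_left' with
  | algebraMap r => rw [zero_mul, pow_zero, one_smul, Algebra.commutes]
  | add x z m _ _ hx hz => rw [add_mul, hx, hz, mul_add, smul_add]
  | mem_mul v hv m x _ hx =>
    obtain ⟨v, rfl⟩ := hv
    rw [mul_assoc, hx, mul_smul_comm, ← mul_assoc, ι_mul_eq_neg_one_pow_smul v hy,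
      smul_mul_assoc, smul_smul, ← pow_add, ← Nat.succ_mul, mul_assoc]

theorem map_ι_sup_pow_two_mul (v : M) (S : Submodule R M) (P : Submodule R (ExteriorAlgebra R M)) :
    (R ∙ v ⊔ S).map (ι R) ^ 2 * P =
      (R ∙ ι R v) * (S.map (ι R) * P) ⊔ S.map (ι R) ^ 2 * P := by
  have v_mul_v : (R ∙ ι R v) * (R ∙ ι R v) = ⊥ := by
    rw [Submodule.span_mul_span, Set.singleton_mul_singleton, ι_sq_zero,
      Submodule.span_zero_singleton]
  have S_mul_v : S.map (ι R) * (R ∙ ι R v) = (R ∙ ι R v) * S.map (ι R) := by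
    simpa only [Submodule.map_span, Set.image_singleton] using (commute_map_ι S (R ∙ v)).eq
  rw [Submodule.map_sup, Submodule.map_span, Set.image_singleton, pow_two, pow_two,
    Submodule.sup_mul, Submodule.mul_sup, Submodule.mul_sup, v_mul_v, S_mul_v, bot_sup_eq,
    ← sup_assoc, sup_idem, Submodule.sup_mul, mul_assoc]

theorem mul_eq_zero_of_map_ι_pow_eq_bot {S T U : Submodule R M} {k : ℕ}
    (hS : S.map (ι R) ^ (k + 1) = ⊥) {x y : ExteriorAlgebra R M}
    (hx : x ∈ S.map (ι R) * T.map (ι R)) (hy : y ∈ S.map (ι R) ^ k * U.map (ι R)) :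
    x * y = 0 := by
  have mul_eq_bot : S.map (ι R) * T.map (ι R) * (S.map (ι R) ^ k * U.map (ι R)) = ⊥ := by
    calc S.map (ι R) * T.map (ι R) * (S.map (ι R) ^ k * U.map (ι R))
        = S.map (ι R) * (T.map (ι R) * S.map (ι R) ^ k) * U.map (ι R) := by
          simp only [mul_assoc]
      _ = S.map (ι R) ^ (k + 1) * (T.map (ι R) * U.map (ι R)) := by
          rw [((commute_map_ι T S).pow_right k).eq, pow_succ']
          simp only [mul_assoc]
      _ = ⊥ := by rw [hS, Submodule.bot_mul]
  rw [← Submodule.mem_bot R, ← mul_eq_bot]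
  exact Submodule.mul_mem_mul hx hy

theorem disjoint_map_ι_pow_mul_map_ι {S T : Submodule R M} (h : IsCompl S T) (n : ℕ)
    (P : Submodule R (ExteriorAlgebra R M)) :
    Disjoint (S.map (ι R) ^ n) (P * T.map (ι R)) := by
  have map_eq_self : ∀ x ∈ S.map (ι R) ^ n, map (S.projection T h) x = x := by
    rw [map_ι_pow_eq_map_exteriorPower]
    rintro _ ⟨x, -, rfl⟩
    have proj_comp : S.projection T h ∘ₗ S.subtype = S.subtype :=
      LinearMap.ext (S.projection_apply_left h)
    exact DFunLike.congr_fun ((map_comp_map _ _).trans (congrArg map proj_comp)) x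
  have map_eq_bot : (P * T.map (ι R)).map (map (S.projection T h)).toLinearMap = ⊥ := by
    have proj_T : T.map (S.projection T h) = ⊥ :=
      LinearMap.le_ker_iff_map.1 (Submodule.ker_projection h).ge
    rw [Submodule.map_mul, ← Submodule.map_comp, map_comp_ι, Submodule.map_comp, proj_T,
      Submodule.map_bot, Submodule.mul_bot]
  rw [Submodule.disjoint_def]
  intro x hS hT
  rw [← map_eq_self x hS]
  exact (Submodule.mem_bot R).1 (map_eq_bot ▸ Submodule.mem_map_of_mem hT)

end Products

section Dimension

variable {K V : Type*} [Field K] [AddCommGroup V] [Module K V]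

theorem finrank_map_ι_pow (S : Submodule K V) [FiniteDimensional K S] (n : ℕ) :
    finrank K ↥(S.map (ι K) ^ n) = (finrank K S).choose n := by
  rw [map_ι_pow_eq_map_exteriorPower, ← exteriorPower.finrank_eq K n]
  exact (Submodule.equivMapOfInjective _ (map_injective_field S.ker_subtype) _).finrank_eq.symm

instance finiteDimensional_map_ι_pow (S : Submodule K V) [FiniteDimensional K S] (n : ℕ) :
    FiniteDimensional K ↥(S.map (ι K) ^ n) := by
  rw [map_ι_pow_eq_map_exteriorPower]
  infer_instance

theorem map_ι_pow_eq_bot {S : Submodule K V} [FiniteDimensional K S] {n : ℕ}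
    (h : finrank K S < n) : S.map (ι K) ^ n = ⊥ := by
  rw [← Submodule.finrank_eq_zero, finrank_map_ι_pow, Nat.choose_eq_zero_of_lt h]

theorem finrank_inf_map_ι_pow_mul_range [FiniteDimensional K V] {W U : Submodule K V}
    (h : IsCompl W U) {n : ℕ} {A : Submodule K (ExteriorAlgebra K V)}
    (hA : W.map (ι K) ^ (n + 1) ≤ A) :
    finrank K ↥(A ⊓ W.map (ι K) ^ n * LinearMap.range (ι K)) =
      (finrank K W).choose (n + 1) + finrank K ↥(A ⊓ W.map (ι K) ^ n * U.map (ι K)) := by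
  have decomp : A ⊓ W.map (ι K) ^ n * LinearMap.range (ι K) =
      W.map (ι K) ^ (n + 1) ⊔ A ⊓ W.map (ι K) ^ n * U.map (ι K) := by
    rw [LinearMap.range_eq_map, ← h.sup_eq_top, Submodule.map_sup, Submodule.mul_sup, ← pow_succ,
      inf_comm, sup_inf_assoc_of_le _ hA, inf_comm]
  have disj : W.map (ι K) ^ (n + 1) ⊓ (A ⊓ W.map (ι K) ^ n * U.map (ι K)) = ⊥ :=
    ((disjoint_map_ι_pow_mul_map_ι h _ _).mono_right inf_le_right).eq_bot
  have : FiniteDimensional K ↥(A ⊓ W.map (ι K) ^ n * U.map (ι K)) :=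
    Submodule.finiteDimensional_of_le (S₂ := ⋀[K]^(n + 1) V) <| inf_le_right.trans <| by
      rw [exteriorPower, pow_succ]
      exact mul_le_mul' (map_ι_pow_le_exteriorPower W n) LinearMap.map_le_range
  rw [decomp, ← finrank_map_ι_pow, ← Submodule.finrank_sup_add_finrank_inf_eq, disj,
    finrank_bot, add_zero]

end Dimension

section Contraction

open CliffordAlgebra (contractLeft contractLeft_ι_mul contractLeft_algebraMap)

variable {R M : Type*} [CommRing R] [AddCommGroup M] [Module R M] {S : Submodule R M}
  {d : Dual R M} {n : ℕ} {x : ExteriorAlgebra R M}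

theorem contractLeft_mem_map_ι_pow (hx : x ∈ S.map (ι R) ^ (n + 1)) :
    contractLeft d x ∈ S.map (ι R) ^ n := by
  induction n generalizing x with
  | zero =>
    rw [zero_add, pow_one] at hx
    obtain ⟨v, -, rfl⟩ := hx
    rw [CliffordAlgebra.contractLeft_ι, pow_zero]
    exact Submodule.algebraMap_mem _
  | succ n ih =>
    rw [pow_succ'] at hx
    induction hx using Submodule.mul_induction_on' with
    | mem_mul_mem v hv y hy =>
      obtain ⟨v, hv, rfl⟩ := hv
      rw [contractLeft_ι_mul, pow_succ']
      exact sub_mem (Submodule.smul_mem _ _ (pow_succ' (S.map (ι R)) n ▸ hy))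
        (Submodule.mul_mem_mul ⟨v, hv, rfl⟩ (ih hy))
    | add y _ z _ hy hz => rw [map_add]; exact add_mem hy hz

theorem contractLeft_eq_zero (hd : S ≤ LinearMap.ker d) (hx : x ∈ S.map (ι R) ^ n) :
    contractLeft d x = 0 := by
  induction hx using Submodule.pow_induction_on_left' with
  | algebraMap r => exact contractLeft_algebraMap _ d r
  | add x y n _ _ hx hy => rw [map_add, hx, hy, add_zero]
  | mem_mul v hv _ x _ hx =>
    obtain ⟨v, hv, rfl⟩ := hv
    have hdv : d v = 0 := hd hv
    rw [contractLeft_ι_mul, hdv, hx, zero_smul, mul_zero, sub_zero]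

theorem contractLeft_ι_mul_eq_self {v : M} (hdv : d v = 1) (hd : S ≤ LinearMap.ker d)
    (hx : x ∈ S.map (ι R) ^ n) : contractLeft d (ι R v * x) = x := by
  rw [contractLeft_ι_mul, hdv, one_smul, contractLeft_eq_zero hd hx, mul_zero, sub_zero]

theorem eq_ι_mul_contractLeft {v : M} (hdv : d v = 1) (hx : ι R v * x = 0) :
    x = ι R v * contractLeft d x := by
  have h := contractLeft_ι_mul d v x
  rw [hx, map_zero, hdv, one_smul] at h
  exact sub_eq_zero.1 h.symm

theorem ι_mul_contractLeft_eq_zero {v : M} (hdv : d v = 0) (hx : ι R v * x = 0) :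
    ι R v * contractLeft d x = 0 := by
  have h := contractLeft_ι_mul d v x
  rwa [hx, map_zero, hdv, zero_smul, zero_sub, zero_eq_neg] at h

end Contraction

section Division

open CliffordAlgebra (contractLeft)

variable {K V : Type*} [Field K] [AddCommGroup V] [Module K V] {S : Submodule K V} {v : V}
  {n : ℕ} {x : ExteriorAlgebra K V}

theorem exists_dual_eq_one_le_ker (hv : v ∉ S) :
    ∃ d : Dual K V, d v = 1 ∧ S ≤ LinearMap.ker d := by
  obtain ⟨d, hdv, hd⟩ := Submodule.exists_le_ker_of_notMem hv
  refine ⟨(d v)⁻¹ • d, inv_mul_cancel₀ hdv, fun s hs => ?_⟩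
  have hds : d s = 0 := hd hs
  simp [hds]

theorem eq_zero_of_ι_mul_eq_zero (hv : v ∉ S) (hx : x ∈ S.map (ι K) ^ n)
    (h : ι K v * x = 0) : x = 0 := by
  obtain ⟨d, hdv, hd⟩ := exists_dual_eq_one_le_ker hv
  rw [← contractLeft_ι_mul_eq_self hdv hd hx, h, map_zero]

theorem eq_of_ι_mul_add_eq_ι_mul_add {m : ℕ} (hv : v ∉ S) {x' y y' : ExteriorAlgebra K V}
    (hx : x ∈ S.map (ι K) ^ n) (hx' : x' ∈ S.map (ι K) ^ n) (hy : y ∈ S.map (ι K) ^ m)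
    (hy' : y' ∈ S.map (ι K) ^ m) (h : ι K v * x + y = ι K v * x' + y') : x = x' := by
  obtain ⟨d, hdv, hd⟩ := exists_dual_eq_one_le_ker hv
  have hd_apply := congrArg (contractLeft d) h
  rwa [map_add, map_add, contractLeft_ι_mul_eq_self hdv hd hx,
    contractLeft_ι_mul_eq_self hdv hd hx', contractLeft_eq_zero hd hy,
    contractLeft_eq_zero hd hy', add_zero, add_zero] at hd_apply

-- Divide by the vectors one at a time; contracting keeps the remaining ones annihilating.
theorem mem_span_pow_mul_of_ι_mul_eq_zero {k : ℕ} {e : Fin k → V} (he : LinearIndependent K e)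
    (hx : x ∈ S.map (ι K) ^ (n + k)) (h : ∀ i, ι K (e i) * x = 0) :
    x ∈ (Submodule.span K (Set.range e)).map (ι K) ^ k * S.map (ι K) ^ n := by
  induction k generalizing x with
  | zero => simpa using hx
  | succ k ih =>
    obtain ⟨he_tail, he_zero⟩ := linearIndependent_finSucc.1 he
    obtain ⟨d, hde, hd⟩ := exists_dual_eq_one_le_ker he_zero
    have quotient_mem := ih he_tail (contractLeft_mem_map_ι_pow hx) fun i =>
      ι_mul_contractLeft_eq_zero (hd (Submodule.subset_span ⟨i, rfl⟩)) (h i.succ)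
    have tail_le : Submodule.span K (Set.range (Fin.tail e)) ≤ Submodule.span K (Set.range e) :=
      Submodule.span_mono (Set.range_comp_subset_range Fin.succ e)
    rw [eq_ι_mul_contractLeft hde (h 0), pow_succ', mul_assoc]
    exact Submodule.mul_mem_mul ⟨e 0, Submodule.subset_span ⟨0, rfl⟩, rfl⟩
      (mul_le_mul_left (pow_le_pow_left' (Submodule.map_mono tail_le) k) _ quotient_mem)

theorem mem_map_ι_pow_mul_of_ι_mul_eq_zero {T : Submodule K V} [FiniteDimensional K T] {k : ℕ}
    (hT : finrank K T = k) (hx : x ∈ S.map (ι K) ^ (n + k)) (h : ∀ t ∈ T, ι K t * x = 0) :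
    x ∈ T.map (ι K) ^ k * S.map (ι K) ^ n := by
  have b := finBasisOfFinrankEq K T hT
  have span_b : Submodule.span K (Set.range (T.subtype ∘ b)) = T := by
    rw [Set.range_comp, ← Submodule.map_span, b.span_eq, Submodule.map_subtype_top]
  have x_mem := mem_span_pow_mul_of_ι_mul_eq_zero
    (b.linearIndependent.map' T.subtype T.ker_subtype) hx fun i => h _ (b i).2
  rwa [span_b] at x_mem

theorem eq_zero_of_forall_ι_mul_eq_zero {T : Submodule K V} (hx : x ∈ ⋀[K]^n V)
    (hn : n < finrank K T) (h : ∀ t ∈ T, ι K t * x = 0) : x = 0 := by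
  obtain ⟨e, he⟩ := exists_linearIndependent_of_le_finrank (Nat.succ_le_of_lt hn)
  obtain ⟨he_tail, he_zero⟩ :=
    linearIndependent_finSucc.1 (he.map' T.subtype T.ker_subtype)
  refine eq_zero_of_ι_mul_eq_zero he_zero (n := n) ?_ (h _ (e 0).2)
  have hx' : x ∈ (⊤ : Submodule K V).map (ι K) ^ (0 + n) := by
    rwa [zero_add, Submodule.map_top]
  simpa using mem_span_pow_mul_of_ι_mul_eq_zero he_tail hx' fun i => h _ (e i.succ).2

theorem eq_zero_of_forall_apply_ι_mul_ι_mul_eq_zero {N : Type*} [AddCommGroup N] [Module K N]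
    {f : ExteriorAlgebra K V →ₗ[K] N} (hf : Set.InjOn f (⋀[K]^(n + 2) V)) (hv : v ∉ S)
    (hn : n < finrank K S) (hx : x ∈ S.map (ι K) ^ n)
    (h : ∀ s ∈ S, f (ι K v * (ι K s * x)) = 0) : x = 0 := by
  refine eq_zero_of_forall_ι_mul_eq_zero (map_ι_pow_le_exteriorPower S n hx) hn fun s hs => ?_
  have sx_mem := ι_mul_mem_map_ι_pow hs hx
  have vsx_mem : ι K v * (ι K s * x) ∈ ⋀[K]^(n + 2) V := by
    rw [exteriorPower, pow_succ']
    exact Submodule.mul_mem_mul ⟨v, rfl⟩ (map_ι_pow_le_exteriorPower S _ sx_mem)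
  exact eq_zero_of_ι_mul_eq_zero hv sx_mem
    (hf vsx_mem (zero_mem _) ((h s hs).trans (map_zero f).symm))

end Division

section Graph

variable {R M : Type*} [CommRing R] [AddCommGroup M] [Module R M]

/-- `q` restricts on `⋀²V₀` to a map `⋀²V₀ → ⋀³V₀` whose graph `{v₀ ∧ α + q α}` lies in `A`: the
property characterising `q̃_A`. As in `radOn`, `q` is defined on the whole exterior algebra, and
only its values on `⋀²V₀` matter. -/
def IsGraphMap (A : Submodule R (ExteriorAlgebra R M)) (v₀ : M) (V₀ : Submodule R M)
    (q : ExteriorAlgebra R M →ₗ[R] ExteriorAlgebra R M) : Prop :=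
  ∀ α ∈ V₀.map (ι R) ^ 2, q α ∈ V₀.map (ι R) ^ 3 ∧ ι R v₀ * α + q α ∈ A

/-- The form `q_A(α, β) = vol(v₀ ∧ α ∧ q̃_A(β))`, with `q` in the role of `q̃_A`. -/
def graphForm (vol : ExteriorAlgebra R M →ₗ[R] R) (v₀ : M)
    (q : ExteriorAlgebra R M →ₗ[R] ExteriorAlgebra R M) (α β : ExteriorAlgebra R M) : R :=
  vol (ι R v₀ * (α * q β))

/-- The radical `{α ∈ S | ∀ β ∈ S, q_A(α, β) = 0}` of the restriction of `graphForm` to `S`, over an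
arbitrary base ring; written as an infimum of kernels so that `radOn` unfolds to it over `ℂ`. -/
def graphRadical (vol : ExteriorAlgebra R M →ₗ[R] R) (v₀ : M)
    (q : ExteriorAlgebra R M →ₗ[R] ExteriorAlgebra R M)
    (S : Submodule R (ExteriorAlgebra R M)) : Submodule R (ExteriorAlgebra R M) :=
  S ⊓ ⨅ β ∈ S,
    LinearMap.ker (vol ∘ₗ LinearMap.mulLeft R (ι R v₀) ∘ₗ LinearMap.mulRight R (q β))

theorem mem_graphRadical {vol : ExteriorAlgebra R M →ₗ[R] R} {v₀ : M}
    {q : ExteriorAlgebra R M →ₗ[R] ExteriorAlgebra R M} {S : Submodule R (ExteriorAlgebra R M)}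
    {α : ExteriorAlgebra R M} :
    α ∈ graphRadical vol v₀ q S ↔ α ∈ S ∧ ∀ β ∈ S, graphForm vol v₀ q α β = 0 := by
  simp [graphRadical, graphForm, Submodule.mem_iInf]

namespace IsGraphMap

variable {A : Submodule R (ExteriorAlgebra R M)} {v₀ : M} {V₀ : Submodule R M}
  {q : ExteriorAlgebra R M →ₗ[R] ExteriorAlgebra R M} {vol : ExteriorAlgebra R M →ₗ[R] R}
  {α β γ : ExteriorAlgebra R M}

theorem apply_eq (hq : IsGraphMap A v₀ V₀ q) (hA : Disjoint A (V₀.map (ι R) ^ 3))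
    (hα : α ∈ V₀.map (ι R) ^ 2) (hγ : γ ∈ V₀.map (ι R) ^ 3) (h : ι R v₀ * α + γ ∈ A) :
    q α = γ := by
  obtain ⟨qα_mem, graph_mem⟩ := hq α hα
  have diff_mem : q α - γ ∈ A := by
    simpa only [add_sub_add_left_eq_sub] using sub_mem graph_mem h
  exact sub_eq_zero.1 (Submodule.disjoint_def.1 hA _ diff_mem (sub_mem qα_mem hγ))

theorem mem_inf_span_mul_sup_iff (hq : IsGraphMap A v₀ V₀ q)
    (hA : Disjoint A (V₀.map (ι R) ^ 3)) {P Q : Submodule R (ExteriorAlgebra R M)}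
    (hP : P ≤ V₀.map (ι R) ^ 2) (hQ : Q ≤ V₀.map (ι R) ^ 3) {z : ExteriorAlgebra R M} :
    z ∈ A ⊓ ((R ∙ ι R v₀) * P ⊔ Q) ↔ ∃ α ∈ P, q α ∈ Q ∧ ι R v₀ * α + q α = z := by
  simp only [Submodule.mem_inf, Submodule.mem_sup, Submodule.mem_span_singleton_mul]
  constructor
  · rintro ⟨hzA, _, ⟨α, hα, rfl⟩, γ, hγ, rfl⟩
    obtain rfl := hq.apply_eq hA (hP hα) (hQ hγ) hzA
    exact ⟨α, hα, hγ, rfl⟩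
  · rintro ⟨α, hα, hqα, rfl⟩
    exact ⟨(hq α (hP hα)).2, _, ⟨α, hα, rfl⟩, _, hqα, rfl⟩

-- Expand `vol ((v₀ ∧ α + q α) ∧ (v₀ ∧ β + q β)) = 0`: only the mixed terms survive.
theorem graphForm_comm (hq : IsGraphMap A v₀ V₀ q)
    (hvol : ∀ α ∈ A, ∀ β ∈ A, vol (α * β) = 0) (hV₀ : V₀.map (ι R) ^ 6 = ⊥)
    (hα : α ∈ V₀.map (ι R) ^ 2) (hβ : β ∈ V₀.map (ι R) ^ 2) :
    graphForm vol v₀ q α β = graphForm vol v₀ q β α := by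
  obtain ⟨qα_mem, graph_α⟩ := hq α hα
  obtain ⟨qβ_mem, graph_β⟩ := hq β hβ
  have isotropic := hvol _ graph_α _ graph_β
  have v₀_terms : ι R v₀ * α * (ι R v₀ * β) = 0 := by
    rw [ι_mul_eq_neg_one_pow_smul v₀ (map_ι_pow_le_exteriorPower V₀ 2 hα), smul_mul_assoc,
      mul_assoc, ← mul_assoc (ι R v₀), ι_sq_zero, zero_mul, mul_zero, smul_zero]
  have q_terms : q α * q β = 0 := by
    rw [← Submodule.mem_bot R, ← hV₀, show 6 = 3 + 3 from rfl, pow_add]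
    exact Submodule.mul_mem_mul qα_mem qβ_mem
  have mixed_term : q α * (ι R v₀ * β) = -(ι R v₀ * (β * q α)) := by
    have v₀β_mem : ι R v₀ * β ∈ ⋀[R]^3 M := by
      rw [exteriorPower, pow_succ']
      exact Submodule.mul_mem_mul ⟨v₀, rfl⟩ (map_ι_pow_le_exteriorPower V₀ 2 hβ)
    rw [mul_eq_neg_one_pow_smul (map_ι_pow_le_exteriorPower V₀ 3 qα_mem) v₀β_mem,
      Odd.neg_one_pow (by decide), neg_one_smul, mul_assoc]
  rw [add_mul, mul_add, mul_add, v₀_terms, q_terms, mixed_term, zero_add, add_zero, map_add,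
    map_neg, mul_assoc] at isotropic
  exact add_neg_eq_zero.1 isotropic

end IsGraphMap

end Graph

section Radical

variable {K V : Type*} [Field K] [AddCommGroup V] [Module K V]
  {A : Submodule K (ExteriorAlgebra K V)} {v₀ : V} {V₀ W₀ U₀ : Submodule K V}
  {q : ExteriorAlgebra K V →ₗ[K] ExteriorAlgebra K V} {vol : ExteriorAlgebra K V →ₗ[K] K}
  {α : ExteriorAlgebra K V}

namespace IsGraphMap

theorem injOn_ι_mul_add (hq : IsGraphMap A v₀ V₀ q) (hv₀ : v₀ ∉ V₀) :
    Set.InjOn (fun α => ι K v₀ * α + q α) (V₀.map (ι K) ^ 2 : Submodule K _) :=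
  fun α hα β hβ => eq_of_ι_mul_add_eq_ι_mul_add hv₀ hα hβ (hq α hα).1 (hq β hβ).1

-- `q` vanishes on `⋀²W₀`, so a radical element of `W₀ ∧ U₀` is orthogonal to all of `W₀ ∧ V₀`.
theorem ι_mul_apply_eq_zero (hq : IsGraphMap A v₀ V₀ q) (hA : Disjoint A (V₀.map (ι K) ^ 3))
    (hLag : ∀ α ∈ A, ∀ β ∈ A, vol (α * β) = 0) (hvol : Set.InjOn vol (⋀[K]^6 V))
    (hV₀ : finrank K V₀ = 5) (hv₀ : v₀ ∉ V₀) (hsup : W₀ ⊔ U₀ = V₀)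
    (hW₀ : ∀ β ∈ W₀.map (ι K) ^ 2, ι K v₀ * β ∈ A) (hα : α ∈ V₀.map (ι K) ^ 2)
    (hrad : ∀ β ∈ W₀.map (ι K) * U₀.map (ι K), graphForm vol v₀ q α β = 0) {w : V}
    (hw : w ∈ W₀) : ι K w * q α = 0 := by
  have W₀_le : W₀ ≤ V₀ := le_sup_left.trans_eq hsup
  have q_W₀ : ∀ β ∈ W₀.map (ι K) ^ 2, q β = 0 := fun β hβ =>
    hq.apply_eq hA (pow_le_pow_left' (Submodule.map_mono W₀_le) 2 hβ) (zero_mem _) <| by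
      simpa only [add_zero] using hW₀ β hβ
  have orthogonal : W₀.map (ι K) * V₀.map (ι K) ≤ LinearMap.ker
      (vol ∘ₗ LinearMap.mulLeft K (ι K v₀) ∘ₗ LinearMap.mulLeft K α ∘ₗ q) := by
    rw [← hsup, Submodule.map_sup, Submodule.mul_sup, ← pow_two, sup_le_iff]
    exact ⟨fun β hβ => by simp [q_W₀ β hβ], hrad⟩
  have qα_mem : q α ∈ V₀.map (ι K) ^ 3 := (hq α hα).1
  have wqα_mem := ι_mul_mem_map_ι_pow (W₀_le hw) qα_mem
  refine eq_zero_of_forall_apply_ι_mul_ι_mul_eq_zero hvol hv₀ (by omega) wqα_mem fun v hv => ?_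
  have wv_mem : ι K w * ι K v ∈ W₀.map (ι K) * V₀.map (ι K) :=
    Submodule.mul_mem_mul ⟨w, hw, rfl⟩ ⟨v, hv, rfl⟩
  have : FiniteDimensional K V₀ := .of_finrank_pos (by omega)
  have V₀_pow : V₀.map (ι K) ^ 6 = ⊥ := map_ι_pow_eq_bot (by omega)
  have form_eq_zero : graphForm vol v₀ q (ι K w * ι K v) α = 0 := by
    rw [hq.graphForm_comm hLag V₀_pow (map_ι_mul_map_ι_le W₀_le le_rfl wv_mem) hα]
    exact orthogonal wv_mem
  rw [← mul_assoc (ι K v), ι_mul_ι_eq_neg, neg_mul, mul_neg, map_neg]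
  exact neg_eq_zero.2 form_eq_zero

theorem forall_graphForm_eq_zero_iff (hq : IsGraphMap A v₀ V₀ q)
    (hA : Disjoint A (V₀.map (ι K) ^ 3)) (hLag : ∀ α ∈ A, ∀ β ∈ A, vol (α * β) = 0)
    (hvol : Set.InjOn vol (⋀[K]^6 V)) (hV₀ : finrank K V₀ = 5) (hv₀ : v₀ ∉ V₀)
    (hfin : finrank K W₀ = 2) (hsup : W₀ ⊔ U₀ = V₀)
    (hW₀ : ∀ β ∈ W₀.map (ι K) ^ 2, ι K v₀ * β ∈ A) (hα : α ∈ W₀.map (ι K) * U₀.map (ι K)) :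
    (∀ β ∈ W₀.map (ι K) * U₀.map (ι K), graphForm vol v₀ q α β = 0) ↔
      q α ∈ W₀.map (ι K) ^ 2 * U₀.map (ι K) := by
  have : FiniteDimensional K V₀ := .of_finrank_pos (by omega)
  have : FiniteDimensional K W₀ := .of_finrank_pos (by omega)
  have W₀_pow : W₀.map (ι K) ^ 3 = ⊥ := map_ι_pow_eq_bot (by omega)
  have W₀U₀_le : W₀.map (ι K) * U₀.map (ι K) ≤ V₀.map (ι K) ^ 2 :=
    map_ι_mul_map_ι_le (le_sup_left.trans_eq hsup) (le_sup_right.trans_eq hsup)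
  constructor
  · intro hrad
    have qα_mem : q α ∈ W₀.map (ι K) ^ 2 * V₀.map (ι K) ^ 1 :=
      mem_map_ι_pow_mul_of_ι_mul_eq_zero hfin (hq α (W₀U₀_le hα)).1 fun w hw =>
        hq.ι_mul_apply_eq_zero hA hLag hvol hV₀ hv₀ hsup hW₀ (W₀U₀_le hα) hrad hw
    rwa [pow_one, ← hsup, Submodule.map_sup, Submodule.mul_sup, ← pow_succ, W₀_pow,
      bot_sup_eq] at qα_mem
  · intro qα_mem β hβ
    rw [hq.graphForm_comm hLag (map_ι_pow_eq_bot (by omega)) (W₀U₀_le hα) (W₀U₀_le hβ), graphForm,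
      mul_eq_zero_of_map_ι_pow_eq_bot W₀_pow hβ qα_mem, mul_zero, map_zero]

theorem map_graphRadical (hq : IsGraphMap A v₀ V₀ q)
    (hA : Disjoint A (V₀.map (ι K) ^ 3)) (hLag : ∀ α ∈ A, ∀ β ∈ A, vol (α * β) = 0)
    (hvol : Set.InjOn vol (⋀[K]^6 V)) (hV₀ : finrank K V₀ = 5) (hv₀ : v₀ ∉ V₀)
    (hfin : finrank K W₀ = 2) (hsup : W₀ ⊔ U₀ = V₀)
    (hWA : (K ∙ v₀ ⊔ W₀).map (ι K) ^ 3 ≤ A) :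
    (graphRadical vol v₀ q (W₀.map (ι K) * U₀.map (ι K))).map (LinearMap.mulLeft K (ι K v₀) + q) =
      A ⊓ (K ∙ v₀ ⊔ W₀).map (ι K) ^ 2 * U₀.map (ι K) := by
  have W₀_le : W₀ ≤ V₀ := le_sup_left.trans_eq hsup
  have U₀_le : U₀ ≤ V₀ := le_sup_right.trans_eq hsup
  have hW₀ : ∀ β ∈ W₀.map (ι K) ^ 2, ι K v₀ * β ∈ A := fun β hβ =>
    hWA <| ι_mul_mem_map_ι_pow (Submodule.mem_sup_left (Submodule.mem_span_singleton_self v₀)) <|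
      pow_le_pow_left' (Submodule.map_mono le_sup_right) 2 hβ
  ext z
  rw [map_ι_sup_pow_two_mul, hq.mem_inf_span_mul_sup_iff hA (map_ι_mul_map_ι_le W₀_le U₀_le)
    (map_ι_pow_two_mul_map_ι_le W₀_le U₀_le)]
  simp only [Submodule.mem_map, mem_graphRadical, and_assoc]
  refine exists_congr fun α => and_congr_right fun hα => and_congr_left fun _ => ?_
  exact hq.forall_graphForm_eq_zero_iff hA hLag hvol hV₀ hv₀ hfin hsup hW₀ hα

end IsGraphMap

end Radical

section WedgeSpans

variable {V : Type*} [AddCommGroup V] [Module ℂ V]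

theorem wedge2_eq_pow (S : Submodule ℂ V) : wedge2 S = S.map (ι ℂ) ^ 2 := by
  rw [pow_two, Submodule.mul_eq_span_mul_set, wedge2]
  congr 1
  ext z
  simp [Set.mem_mul, eq_comm]

theorem mixedWedge_eq_mul (W U : Submodule ℂ V) :
    mixedWedge W U = W.map (ι ℂ) * U.map (ι ℂ) := by
  rw [Submodule.mul_eq_span_mul_set, mixedWedge]
  congr 1
  ext z
  simp [Set.mem_mul, eq_comm]

theorem wedge2U_eq_mul (W U : Submodule ℂ V) :
    wedge2U W U = W.map (ι ℂ) ^ 2 * U.map (ι ℂ) := by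
  rw [pow_two, ← Submodule.span_eq (W.map (ι ℂ)), ← Submodule.span_eq (U.map (ι ℂ)),
    Submodule.span_mul_span, Submodule.span_mul_span, wedge2U]
  congr 1
  ext z
  constructor
  · rintro ⟨w₁, hw₁, w₂, hw₂, u, hu, rfl⟩
    exact Set.mul_mem_mul (Set.mul_mem_mul ⟨w₁, hw₁, rfl⟩ ⟨w₂, hw₂, rfl⟩) ⟨u, hu, rfl⟩
  · rintro ⟨_, ⟨_, ⟨w₁, hw₁, rfl⟩, _, ⟨w₂, hw₂, rfl⟩, rfl⟩, _, ⟨u, hu, rfl⟩, rfl⟩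
    exact ⟨w₁, hw₁, w₂, hw₂, u, hu, rfl⟩

theorem wedge3_eq_pow (S : Submodule ℂ V) : wedge3 S = S.map (ι ℂ) ^ 3 :=
  (wedge2U_eq_mul S S).trans (pow_succ _ 2).symm

theorem wedge2V_eq_mul (W : Submodule ℂ V) :
    wedge2V W = W.map (ι ℂ) ^ 2 * LinearMap.range (ι ℂ) := by
  rw [LinearMap.range_eq_map, ← wedge2U_eq_mul, wedge2U, wedge2V]
  simp only [Submodule.mem_top, true_and]

end WedgeSpans

theorem stmt_9_general {K V : Type*} [Field K] [AddCommGroup V] [Module K V]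
    [FiniteDimensional K V] (hV : finrank K V = 6) {vol : ExteriorAlgebra K V →ₗ[K] K}
    (hvol : Set.InjOn vol (⋀[K]^6 V)) {A : Submodule K (ExteriorAlgebra K V)}
    (hLag : ∀ α ∈ A, ∀ β ∈ A, vol (α * β) = 0) {W : Submodule K V} (hW : finrank K W = 3)
    (hWA : W.map (ι K) ^ 3 ≤ A) {v₀ : V} (hv₀ : v₀ ≠ 0) (hv₀W : v₀ ∈ W) {V₀ : Submodule K V}
    (hV₀ : finrank K V₀ = 5) (hcompl : IsCompl (K ∙ v₀) V₀) (hAV₀ : Disjoint A (V₀.map (ι K) ^ 3))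
    {U₀ : Submodule K V} (hdisj : Disjoint (W ⊓ V₀) U₀) (hsup : W ⊓ V₀ ⊔ U₀ = V₀)
    {q : ExteriorAlgebra K V →ₗ[K] ExteriorAlgebra K V} (hq : IsGraphMap A v₀ V₀ q) :
    (graphRadical vol v₀ q ((W ⊓ V₀).map (ι K) * U₀.map (ι K))).map
        (LinearMap.mulLeft K (ι K v₀) + q) = A ⊓ W.map (ι K) ^ 2 * U₀.map (ι K) ∧
      Set.InjOn (fun α => ι K v₀ * α + q α)
        (graphRadical vol v₀ q ((W ⊓ V₀).map (ι K) * U₀.map (ι K)) : Set (ExteriorAlgebra K V)) ∧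
      finrank K ↥(graphRadical vol v₀ q ((W ⊓ V₀).map (ι K) * U₀.map (ι K))) =
        finrank K ↥(A ⊓ W.map (ι K) ^ 2 * LinearMap.range (ι K)) - 1 := by
  have hv₀V₀ : v₀ ∉ V₀ := (Submodule.disjoint_span_singleton' hv₀).1 hcompl.disjoint.symm
  have span_le : K ∙ v₀ ≤ W := (Submodule.span_singleton_le_iff_mem v₀ W).2 hv₀W
  have span_sup_eq : K ∙ v₀ ⊔ W ⊓ V₀ = W := by
    rw [inf_comm, ← sup_inf_assoc_of_le V₀ span_le, hcompl.sup_eq_top, top_inf_eq]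
  have codisjoint : Codisjoint W V₀ := hcompl.codisjoint.mono_left span_le
  have finrank_inf : finrank K ↥(W ⊓ V₀) = 2 := by
    have := Submodule.finrank_sup_add_finrank_inf_eq W V₀
    rw [codisjoint.eq_top, finrank_top] at this
    omega
  have map_eq := hq.map_graphRadical hAV₀ hLag hvol hV₀ hv₀V₀ finrank_inf hsup
    (span_sup_eq.symm ▸ hWA)
  rw [span_sup_eq] at map_eq
  have radical_le :
      graphRadical vol v₀ q ((W ⊓ V₀).map (ι K) * U₀.map (ι K)) ≤ V₀.map (ι K) ^ 2 :=
    inf_le_left.trans (map_ι_mul_map_ι_le inf_le_right (le_sup_right.trans_eq hsup))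
  have inj := (hq.injOn_ι_mul_add hv₀V₀).mono radical_le
  refine ⟨map_eq, inj, ?_⟩
  rw [← finrank_map_of_injOn (f := LinearMap.mulLeft K (ι K v₀) + q) inj, map_eq,
    finrank_inf_map_ι_pow_mul_range (isCompl_of_inf_sup_eq codisjoint hdisj hsup) hWA, hW,
    Nat.choose_self, Nat.add_sub_cancel_left]

/-- With `V` six-dimensional, `A ⊆ ⋀³V` Lagrangian, `W ∈ Θ_A`,
`0 ≠ v₀ ∈ W`, `V₀` a 5-dimensional complement of `ℂv₀` with `A ∩ ⋀³V₀ = 0`,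
`W₀ = W ∩ V₀` and `U₀` a complement of `W₀` in `V₀`:  the map `α ↦ v₀∧α + q̃_A(α)`
restricts to a linear isomorphism from the radical of `q_A|_{W₀∧U₀}` onto
`A ∩ (⋀²W∧U₀)`; consequently the dimension of this radical equals
`dim(A ∩ (⋀²W∧V)) − 1`. -/
theorem stmt_9 {V : Type*} [AddCommGroup V] [Module ℂ V] [FiniteDimensional ℂ V]
    (hV : finrank ℂ V = 6)
    (vol : ExteriorAlgebra ℂ V →ₗ[ℂ] ℂ)
    (hvol : Function.Bijective fun x : ⋀[ℂ]^6 V => vol x)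
    (A : Submodule ℂ (ExteriorAlgebra ℂ V))
    (hA3 : A ≤ ⋀[ℂ]^3 V) (hA10 : finrank ℂ A = 10)
    (hLag : ∀ α ∈ A, ∀ β ∈ A, vol (α * β) = 0)
    (W : Submodule ℂ V) (hW : finrank ℂ W = 3) (hWA : wedge3 W ≤ A)
    (v₀ : V) (hv₀ : v₀ ≠ 0) (hv₀W : v₀ ∈ W)
    (V₀ : Submodule ℂ V) (hV₀ : finrank ℂ V₀ = 5)
    (hcompl : IsCompl (Submodule.span ℂ {v₀}) V₀)
    (hAV₀ : A ⊓ wedge3 V₀ = ⊥)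
    (U₀ : Submodule ℂ V) (hU₀ : U₀ ≤ V₀)
    (hdisj : (W ⊓ V₀) ⊓ U₀ = ⊥) (hsup : (W ⊓ V₀) ⊔ U₀ = V₀)
    -- `qt` is the linear map `q̃_A : ⋀²V₀ → ⋀³V₀`, characterized by `v₀∧β + q̃_A(β) ∈ A`:
    (qt : ExteriorAlgebra ℂ V →ₗ[ℂ] ExteriorAlgebra ℂ V)
    (hqt : ∀ β ∈ wedge2 V₀, qt β ∈ wedge3 V₀ ∧ ι ℂ v₀ * β + qt β ∈ A) :
    Submodule.map (LinearMap.mulLeft ℂ (ι ℂ v₀) + qt)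
        (radOn vol v₀ qt (mixedWedge (W ⊓ V₀) U₀)) = A ⊓ wedge2U W U₀ ∧
    Set.InjOn (fun α => ι ℂ v₀ * α + qt α)
        (radOn vol v₀ qt (mixedWedge (W ⊓ V₀) U₀) : Set (ExteriorAlgebra ℂ V)) ∧
    finrank ℂ ↥(radOn vol v₀ qt (mixedWedge (W ⊓ V₀) U₀)) =
      finrank ℂ ↥(A ⊓ wedge2V W) - 1 := by
  simp only [wedge2_eq_pow, wedge3_eq_pow, ← disjoint_iff] at hWA hAV₀ hqt hdisj
  rw [mixedWedge_eq_mul, wedge2U_eq_mul, wedge2V_eq_mul]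
  exact stmt_9_general hV (Set.injOn_iff_injective.2 hvol.1) hLag hW hWA hv₀ hv₀W hV₀ hcompl hAV₀
    hdisj hsup hqt
end

section
/- Let V be a 6-dimensional complex vector space, A ⊆ ⋀³V a Lagrangian subspace, 0 ≠ v₀ ∈ V, and V₀ a 5-dimensional subspace with V = ℂv₀ ⊕ V₀ and A ∩ ⋀³V₀ = 0. Then the bilinear form q_A on ⋀²V₀ defined by q_A(α,β) = vol₀(α ∧ q̃_A(β)) is symmetric: vol₀(α ∧ q̃_A(β)) = vol₀(β ∧ q̃_A(α)) for all α, β ∈ ⋀²V₀. -/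
/-!
Since `A` is Lagrangian, `vol` kills the product `(v₀∧α + s) ∧ (v₀∧β + t)`. Even elements of the
exterior algebra are central and odd ones anticommute, so `v₀∧α∧v₀∧β = 0` and
`s∧v₀∧β = -v₀∧β∧s`; moreover `s∧t ∈ ⋀⁶V₀ = 0`, as `dim V₀ = 5`. What remains of the product is
`v₀∧α∧t - v₀∧β∧s`.
-/

open Module ExteriorAlgebra

section CommRing

open CliffordAlgebra (evenOdd)

variable {R M : Type*} [CommRing R] [AddCommGroup M] [Module R M]

lemma mul_eq_neg_mul_of_mem_evenOdd_one {x y : ExteriorAlgebra R M}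
    (hx : x ∈ evenOdd (0 : QuadraticForm R M) 1) (hy : y ∈ evenOdd (0 : QuadraticForm R M) 1) :
    x * y = -(y * x) := by
  simpa using CliffordAlgebra.map_mul_map_eq_neg_of_isOrtho_of_mem_evenOdd_one
    (.id 0) (.id 0) (fun _ _ => .all _ _) x y hx hy

lemma commute_of_mem_evenOdd_zero {x : ExteriorAlgebra R M}
    (hx : x ∈ evenOdd (0 : QuadraticForm R M) 0) (y : ExteriorAlgebra R M) : Commute x y := by
  have commute_homogeneous {i : ZMod 2} {z : ExteriorAlgebra R M}
      (hz : z ∈ evenOdd (0 : QuadraticForm R M) i) : Commute x z := by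
    simpa using CliffordAlgebra.commute_map_mul_map_of_isOrtho_of_mem_evenOdd_zero_left
      (.id 0) (.id 0) (fun _ _ => .all _ _) x z hx hz
  have hy : y ∈ evenOdd (0 : QuadraticForm R M) 0 ⊔ evenOdd (0 : QuadraticForm R M) 1 :=
    (CliffordAlgebra.evenOdd_isCompl (0 : QuadraticForm R M)).sup_eq_top ▸ Submodule.mem_top
  obtain ⟨y₀, hy₀, y₁, hy₁, rfl⟩ := Submodule.mem_sup.mp hy
  exact (commute_homogeneous hy₀).add_right (commute_homogeneous hy₁)

lemma map_ι_pow_le_evenOdd (W : Submodule R M) (n : ℕ) :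
    W.map (ι R) ^ n ≤ evenOdd (0 : QuadraticForm R M) n :=
  (pow_le_pow_left' LinearMap.map_le_range n).trans <|
    le_iSup_of_le ⟨n, rfl⟩ le_rfl

lemma ι_mul_add_mul_ι_mul_add (v : M) {α β s t : ExteriorAlgebra R M}
    (hα : α ∈ evenOdd (0 : QuadraticForm R M) 0) (hβ : β ∈ evenOdd (0 : QuadraticForm R M) 0)
    (hs : s ∈ evenOdd (0 : QuadraticForm R M) 1) :
    (ι R v * α + s) * (ι R v * β + t) = ι R v * (α * t) - ι R v * (β * s) + s * t := by
  have hαβ : ι R v * α * (ι R v * β) = 0 := by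
    rw [(commute_of_mem_evenOdd_zero hα _).symm.eq, mul_assoc, ← mul_assoc (ι R v), ι_sq_zero,
      zero_mul, mul_zero]
  have hsβ : s * (ι R v * β) = -(ι R v * (β * s)) := by
    rw [← mul_assoc, mul_eq_neg_mul_of_mem_evenOdd_one hs (CliffordAlgebra.ι_mem_evenOdd_one _ v),
      neg_mul, mul_assoc, (commute_of_mem_evenOdd_zero hβ s).eq]
  rw [add_mul, mul_add, mul_add, hαβ, hsβ, mul_assoc]
  abel

lemma map_ι_pow_eq_bot_s10 {W : Submodule R M} (hW : W.FG) {n : ℕ} (hn : W.spanFinrank < n) :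
    W.map (ι R) ^ n = ⊥ := by
  obtain ⟨s, hs_card, rfl⟩ := hW.exists_span_finset_card_eq_spanFinrank
  rw [Submodule.map_span, Submodule.span_pow, Submodule.span_eq_bot]
  intro x hx
  obtain ⟨f, rfl⟩ := Set.mem_pow.mp hx
  choose g hg_mem hg using fun i => (f i).2
  obtain ⟨i, -, j, -, hij, hg_eq⟩ := Finset.exists_ne_map_eq_of_card_lt_of_maps_to
    (s := Finset.univ) (by simpa [hs_card] using hn) fun i _ => hg_mem i
  simpa only [ιMulti_apply, hg] using (ιMulti R n).map_eq_zero_of_eq g hg_eq hij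

theorem stmt_10_general {N : Type*} [AddCommGroup N] [Module R N]
    (f : ExteriorAlgebra R M →ₗ[R] N) (A : Submodule R (ExteriorAlgebra R M))
    (hA : ∀ x ∈ A, ∀ y ∈ A, f (x * y) = 0)
    (v : M) (W : Submodule R M) (hW : W.FG) {n : ℕ} (hn : Odd n) (hWn : W.spanFinrank < n + n) :
    ∀ α ∈ evenOdd (0 : QuadraticForm R M) 0, ∀ β ∈ evenOdd (0 : QuadraticForm R M) 0,
      ∀ s ∈ W.map (ι R) ^ n, ∀ t ∈ W.map (ι R) ^ n,
      ι R v * α + s ∈ A → ι R v * β + t ∈ A →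
      f (ι R v * (α * t)) = f (ι R v * (β * s)) := by
  intro α hα β hβ s hs t ht hαs hβt
  have hs_odd := hn.natCast_zmod_two ▸ map_ι_pow_le_evenOdd W n hs
  have hst : s * t = 0 := by
    have hst_mem := Submodule.mul_mem_mul hs ht
    rwa [← pow_add, map_ι_pow_eq_bot_s10 hW hWn, Submodule.mem_bot] at hst_mem
  have hf := hA _ hαs _ hβt
  rwa [ι_mul_add_mul_ι_mul_add v hα hβ hs_odd, hst, add_zero, map_sub, sub_eq_zero] at hf

end CommRing

lemma spanFinrank_eq_finrank {R M : Type*} [Semiring R] [StrongRankCondition R]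
    [AddCommMonoid M] [Module R M] (W : Submodule R M) [Module.Free R W] :
    W.spanFinrank = finrank R W := by
  rw [← W.spanFinrank_top, Module.finrank_eq_spanFinrank_of_free]

section Wedge

variable {V : Type*} [AddCommGroup V] [Module ℂ V]

lemma wedge2_eq_map_ι_pow (W : Submodule ℂ V) : wedge2 W = W.map (ι ℂ) ^ 2 := by
  conv_rhs => rw [← W.span_eq, Submodule.map_span, pow_two, Submodule.span_mul_span]
  rw [wedge2]
  congr 1
  ext z
  simp [Set.mem_mul, eq_comm]

lemma wedge3_eq_map_ι_pow (W : Submodule ℂ V) : wedge3 W = W.map (ι ℂ) ^ 3 := by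
  conv_rhs => rw [← W.span_eq, Submodule.map_span, pow_succ, pow_two, Submodule.span_mul_span,
    Submodule.span_mul_span]
  rw [wedge3]
  congr 1
  ext z
  simp [Set.mem_mul, and_assoc, eq_comm]

lemma wedge2_le_evenOdd_zero (W : Submodule ℂ V) :
    wedge2 W ≤ CliffordAlgebra.evenOdd (0 : QuadraticForm ℂ V) 0 :=
  wedge2_eq_map_ι_pow W ▸ map_ι_pow_le_evenOdd W 2

end Wedge

/-- With `V` six-dimensional, `A ⊆ ⋀³V` Lagrangian, `0 ≠ v₀ ∈ V` and `V₀`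
a 5-dimensional complement of `ℂv₀` with `A ∩ ⋀³V₀ = 0`, the form
`q_A(α,β) = vol₀(α ∧ q̃_A(β))` on `⋀²V₀` is symmetric: whenever `s, t ∈ ⋀³V₀` satisfy
`v₀∧α + s ∈ A` and `v₀∧β + t ∈ A` (so `s = q̃_A(α)`, `t = q̃_A(β)`), one has
`vol₀(α ∧ q̃_A(β)) = vol₀(β ∧ q̃_A(α))`, where `vol₀(η) = vol(v₀ ∧ η)`. -/
theorem stmt_10 {V : Type*} [AddCommGroup V] [Module ℂ V] [FiniteDimensional ℂ V]
    (hV : finrank ℂ V = 6)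
    (vol : ExteriorAlgebra ℂ V →ₗ[ℂ] ℂ)
    (hvol : Function.Bijective fun x : ⋀[ℂ]^6 V => vol x)
    (A : Submodule ℂ (ExteriorAlgebra ℂ V))
    (hA3 : A ≤ ⋀[ℂ]^3 V) (hA10 : finrank ℂ A = 10)
    (hLag : ∀ α ∈ A, ∀ β ∈ A, vol (α * β) = 0)
    (v₀ : V) (hv₀ : v₀ ≠ 0)
    (V₀ : Submodule ℂ V) (hV₀ : finrank ℂ V₀ = 5)
    (hcompl : IsCompl (Submodule.span ℂ {v₀}) V₀)
    (hAV₀ : A ⊓ wedge3 V₀ = ⊥) :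
    ∀ α ∈ wedge2 V₀, ∀ β ∈ wedge2 V₀, ∀ s ∈ wedge3 V₀, ∀ t ∈ wedge3 V₀,
      ι ℂ v₀ * α + s ∈ A → ι ℂ v₀ * β + t ∈ A →
      vol (ι ℂ v₀ * (α * t)) = vol (ι ℂ v₀ * (β * s)) := by
  intro α hα β hβ s hs t ht
  rw [wedge3_eq_map_ι_pow] at hs ht
  exact stmt_10_general vol A hLag v₀ V₀ (IsNoetherian.noetherian V₀) (by decide)
    (by norm_num [spanFinrank_eq_finrank, hV₀])
    α (wedge2_le_evenOdd_zero V₀ hα) β (wedge2_le_evenOdd_zero V₀ hβ) s hs t ht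
end

section
/- Let V₀ be a 5-dimensional complex vector space and K ⊂ ⋀²V₀ a 2-dimensional subspace. Assume: (i) there is a 2-dimensional subspace W₀ ⊂ V₀ such that {γ ∈ K : γ∧γ = 0 in ⋀⁴V₀} = ⋀²W₀ (so the decomposable vectors of K form exactly the line ⋀²W₀ ⊂ K); (ii) K is not contained in W₀∧V₀ (the span of {w∧v : w ∈ W₀, v ∈ V₀}). Then there exists a basis {w₁, w₂, u₁, u₂, u₃} of V₀ such that W₀ = span(w₁,w₂) and K = span(w₁∧w₂, w₁∧u₁ + u₂∧u₃). -/
/-!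
Choose `κ ∈ K` outside `W ∧ V`. Modulo `W ∧ V` it is a bivector on a complement of `W`, and since
two planes in a space of dimension three share a line, it is decomposable there: `κ ≡ u₂ ∧ u₃`.
The remaining part of `κ` lies in `W ∧ V`, and completing the product, that is, moving `u₂` and `u₃`
by vectors of `W`, turns `κ` into `ω + w ∧ u₁ + u₂ ∧ u₃` with `ω ∈ ⋀²W` and `w ∈ W`. Here `w ≠ 0`,
for otherwise `κ - ω` would be a decomposable vector of `K` outside `⋀²W`.
-/

open Module ExteriorAlgebra

noncomputable section

variable {V : Type*} [AddCommGroup V] [Module ℂ V]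

/-- The subspace `W₀ ∧ V` (span of `w∧v`, `w ∈ W₀`, `v ∈ V`) inside the exterior algebra. -/
def wedgeWithAll (W₀ : Submodule ℂ V) : Submodule ℂ (ExteriorAlgebra ℂ V) :=
  Submodule.span ℂ {z | ∃ w ∈ W₀, ∃ v : V, z = ι ℂ w * ι ℂ v}

end

/-- The span `A ∧ B` of the products `a ∧ b`, `a ∈ A`, `b ∈ B`, inside the exterior algebra. In
particular `wedge W W` is the image of `⋀²W`. -/
def wedge {R M : Type*} [CommRing R] [AddCommGroup M] [Module R M] (A B : Submodule R M) :
    Submodule R (ExteriorAlgebra R M) :=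
  A.map (ι R) * B.map (ι R)

section CommRing

variable {R M : Type*} [CommRing R] [AddCommGroup M] [Module R M]

lemma ι_mul_ι_swap (x y : M) : ι R x * ι R y = -(ι R y * ι R x) :=
  eq_neg_of_add_eq_zero_left (ι_add_mul_swap x y)

lemma ι_mul_ι_mul_self (x y : M) : ι R x * ι R y * (ι R x * ι R y) = 0 := by
  nth_rw 1 [ι_mul_ι_swap]
  rw [neg_mul, mul_assoc, ← mul_assoc (ι R x), ι_sq_zero, zero_mul, mul_zero, neg_zero]

lemma ι_mul_ι_mem_wedge {A B : Submodule R M} {a b : M} (ha : a ∈ A) (hb : b ∈ B) :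
    ι R a * ι R b ∈ wedge A B :=
  Submodule.mul_mem_mul (Submodule.mem_map_of_mem ha) (Submodule.mem_map_of_mem hb)

lemma wedge_le {A B : Submodule R M} {P : Submodule R (ExteriorAlgebra R M)} :
    wedge A B ≤ P ↔ ∀ a ∈ A, ∀ b ∈ B, ι R a * ι R b ∈ P := by
  simp only [wedge, Submodule.mul_le, Submodule.mem_map, forall_exists_index, and_imp,
    forall_apply_eq_imp_iff₂]

lemma wedge_mono {A A' B B' : Submodule R M} (hA : A ≤ A') (hB : B ≤ B') :
    wedge A B ≤ wedge A' B' :=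
  mul_le_mul' (Submodule.map_mono hA) (Submodule.map_mono hB)

lemma wedge_comm (A B : Submodule R M) : wedge A B = wedge B A := by
  have wedge_le_swap (A B : Submodule R M) : wedge A B ≤ wedge B A :=
    wedge_le.2 fun a ha b hb ↦ ι_mul_ι_swap (R := R) a b ▸ neg_mem (ι_mul_ι_mem_wedge hb ha)
  exact le_antisymm (wedge_le_swap A B) (wedge_le_swap B A)

lemma wedge_sup (A B C : Submodule R M) : wedge A (B ⊔ C) = wedge A B ⊔ wedge A C := by
  simp only [wedge, Submodule.map_sup, Submodule.mul_sup]

lemma sup_wedge (A B C : Submodule R M) : wedge (A ⊔ B) C = wedge A C ⊔ wedge B C := by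
  simp only [wedge, Submodule.map_sup, Submodule.sup_mul]

lemma mem_wedge_span_singleton {A : Submodule R M} {b : M} {τ : ExteriorAlgebra R M} :
    τ ∈ wedge A (Submodule.span R {b}) ↔ ∃ a ∈ A, ι R a * ι R b = τ := by
  simp [wedge, Submodule.map_span, Submodule.mem_mul_span_singleton]

lemma wedge_top_top : wedge (⊤ : Submodule R M) ⊤ = ⋀[R]^2 M := by
  simp [wedge, exteriorPower, pow_two]

lemma wedge_top_top_eq_sup {A B : Submodule R M} (h : A ⊔ B = ⊤) :
    wedge (⊤ : Submodule R M) ⊤ = wedge A ⊤ ⊔ wedge B B := by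
  refine le_antisymm ?_ (sup_le (wedge_mono le_top le_rfl) (wedge_mono le_top le_top))
  calc wedge (⊤ : Submodule R M) ⊤
    _ = wedge A ⊤ ⊔ (wedge A B ⊔ wedge B B) := by
      rw [← wedge_comm B A, ← wedge_sup, h, ← sup_wedge, h]
    _ ≤ wedge A ⊤ ⊔ wedge B B :=
      sup_le le_sup_left (sup_le_sup_right (wedge_mono le_rfl le_top) _)

/-- Completing the product: since `p ∧ u + q ∧ v + u ∧ v = (u + q) ∧ (v - p) + q ∧ p`, the terms
of `τ` involving `u` and `v` can be absorbed into `u ∧ v`. -/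
lemma exists_add_ι_mul_ι_eq {W : Submodule R M} {c u v : M}
    (h : W ⊔ Submodule.span R {c, u, v} = ⊤) {τ : ExteriorAlgebra R M} (hτ : τ ∈ wedge W ⊤) :
    ∃ ω ∈ wedge W W, ∃ w ∈ W, ∃ p ∈ W, ∃ q ∈ W,
      τ + ι R u * ι R v = ω + (ι R w * ι R c + ι R (u + q) * ι R (v - p)) := by
  simp only [← h, Submodule.span_insert, wedge_sup, Submodule.mem_sup,
    mem_wedge_span_singleton] at hτ
  obtain ⟨ω, hω, _, ⟨_, ⟨w, hw, rfl⟩, _, ⟨_, ⟨p, hp, rfl⟩, _, ⟨q, hq, rfl⟩, rfl⟩, rfl⟩, rfl⟩ := hτ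
  refine ⟨ω + ι R q * ι R p, add_mem hω (ι_mul_ι_mem_wedge hq hp), w, hw, p, hp, q, hq, ?_⟩
  simp only [map_add, map_sub, add_mul, mul_sub, ι_mul_ι_swap p u]
  abel

lemma sup_span_triple_add_eq {W : Submodule R M} {c u v p q : M} (hp : p ∈ W) (hq : q ∈ W) :
    W ⊔ Submodule.span R {c, u + q, v - p} = W ⊔ Submodule.span R {c, u, v} := by
  have hp0 : W.mkQ p = 0 := by simpa using hp
  have hq0 : W.mkQ q = 0 := by simpa using hq
  simp only [← Submodule.comap_map_mkQ, Submodule.map_span, Set.image_insert_eq,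
    Set.image_singleton, map_add, map_sub, hp0, hq0, add_zero, sub_zero]

end CommRing

section Field

variable {F V : Type*} [Field F] [AddCommGroup V] [Module F V]

lemma exists_span_insert_eq {s : Set V} {U : Submodule F V} [FiniteDimensional F U]
    (hs : Submodule.span F s ≤ U) (hU : finrank F U = finrank F (Submodule.span F s) + 1) :
    ∃ c, Submodule.span F (insert c s) = U := by
  have hlt : Submodule.span F s < U := hs.lt_of_ne fun h ↦ by rw [h] at hU; omega
  obtain ⟨c, hcU, hcs⟩ := SetLike.exists_of_lt hlt
  have hle : Submodule.span F (insert c s) ≤ U :=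
    Submodule.span_le.2 (Set.insert_subset hcU (Submodule.span_le.1 hs))
  have : FiniteDimensional F (Submodule.span F (insert c s)) :=
    Submodule.finiteDimensional_of_le hle
  have hslt : Submodule.span F s < Submodule.span F (insert c s) :=
    (Submodule.span_mono (Set.subset_insert c s)).lt_of_not_ge
      fun h ↦ hcs (h (Submodule.subset_span (Set.mem_insert c s)))
  exact ⟨c, Submodule.eq_of_le_of_finrank_le hle
    (hU.trans_le (Submodule.finrank_lt_finrank_of_lt hslt))⟩

lemma finrank_span_pair_eq_two_iff {x y : V} :
    finrank F (Submodule.span F {x, y}) = 2 ↔ LinearIndependent F ![x, y] := by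
  rw [linearIndependent_iff_card_eq_finrank_span, Matrix.range_cons_cons_empty, Set.finrank,
    Fintype.card_fin, eq_comm]

lemma span_pair_eq_of_finrank_eq_two {U : Submodule F V} (hU : finrank F U = 2) {x y : V}
    (hx : x ∈ U) (hy : y ∈ U) (h : LinearIndependent F ![x, y]) :
    Submodule.span F {x, y} = U := by
  have : FiniteDimensional F U := finite_of_finrank_eq_succ hU
  exact Submodule.eq_of_le_of_finrank_eq (Submodule.span_le.2 (Set.pair_subset hx hy))
    ((finrank_span_pair_eq_two_iff.2 h).trans hU.symm)

lemma ι_mul_ι_ne_zero_iff {x y : V} : ι F x * ι F y ≠ 0 ↔ LinearIndependent F ![x, y] := by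
  refine ⟨fun h ↦ ?_, fun h h0 ↦ ?_⟩
  · have hx : x ≠ 0 := by rintro rfl; simp at h
    rw [LinearIndependent.pair_iff' hx]
    rintro a rfl
    simp at h
  · have hne := (exteriorPower.ιMulti_family_linearIndependent_field 2 h).ne_zero
      (Set.powersetCard.ofFinEmbEquiv (RelEmbedding.refl _))
    refine hne (Subtype.ext ?_)
    simpa [ExteriorAlgebra.ιMulti_family, ιMulti_apply] using h0

lemma exists_ι_mul_ι_eq_of_mem_span_pair {x y z : V} (hz : z ∈ Submodule.span F {x, y})
    (hz0 : z ≠ 0) : ∃ s ∈ Submodule.span F {x, y}, ι F z * ι F s = ι F x * ι F y := by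
  obtain ⟨a, b, rfl⟩ := Submodule.mem_span_pair.1 hz
  by_cases ha : a = 0
  · have hb : b ≠ 0 := by rintro rfl; simp [ha] at hz0
    refine ⟨-b⁻¹ • x, Submodule.smul_mem _ _ (Submodule.subset_span (by simp)), ?_⟩
    simp [ha, hb, ι_mul_ι_swap x y]
  · refine ⟨a⁻¹ • y, Submodule.smul_mem _ _ (Submodule.subset_span (by simp)), ?_⟩
    simp [ha, add_mul]

lemma exists_mem_inf_ne_zero {A B U : Submodule F V} [FiniteDimensional F U] (hA : A ≤ U)
    (hB : B ≤ U) (h : finrank F U < finrank F A + finrank F B) : ∃ z ∈ A ⊓ B, z ≠ 0 := by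
  have := Submodule.finiteDimensional_of_le hA
  have := Submodule.finiteDimensional_of_le hB
  have hsup := Submodule.finrank_mono (sup_le hA hB)
  have hsum := Submodule.finrank_sup_add_finrank_inf_eq A B
  refine Submodule.exists_mem_ne_zero_of_ne_bot fun hbot ↦ ?_
  rw [hbot, finrank_bot] at hsum
  omega

lemma exists_ι_mul_ι_eq_add {U : Submodule F V} [FiniteDimensional F U] (hU : finrank F U ≤ 3)
    {x y x' y' : V} (hx : x ∈ U) (hy : y ∈ U) (hx' : x' ∈ U) (hy' : y' ∈ U) :
    ∃ z ∈ U, ∃ s ∈ U, ι F z * ι F s = ι F x * ι F y + ι F x' * ι F y' := by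
  by_cases h0 : ι F x * ι F y = 0
  · exact ⟨x', hx', y', hy', by rw [h0, zero_add]⟩
  by_cases h0' : ι F x' * ι F y' = 0
  · exact ⟨x, hx, y, hy, by rw [h0', add_zero]⟩
  have hP : Submodule.span F {x, y} ≤ U := Submodule.span_le.2 (Set.pair_subset hx hy)
  have hP' : Submodule.span F {x', y'} ≤ U := Submodule.span_le.2 (Set.pair_subset hx' hy')
  obtain ⟨z, hz, hz0⟩ : ∃ z ∈ Submodule.span F {x, y} ⊓ Submodule.span F {x', y'}, z ≠ 0 := by
    refine exists_mem_inf_ne_zero hP hP' ?_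
    rw [finrank_span_pair_eq_two_iff.2 (ι_mul_ι_ne_zero_iff.1 h0),
      finrank_span_pair_eq_two_iff.2 (ι_mul_ι_ne_zero_iff.1 h0')]
    omega
  obtain ⟨s, hs, hzs⟩ := exists_ι_mul_ι_eq_of_mem_span_pair hz.1 hz0
  obtain ⟨s', hs', hzs'⟩ := exists_ι_mul_ι_eq_of_mem_span_pair hz.2 hz0
  exact ⟨z, hP hz.1, s + s', add_mem (hP hs) (hP' hs'), by rw [map_add, mul_add, hzs, hzs']⟩

lemma exists_ι_mul_ι_eq_of_mem_wedge_self {U : Submodule F V} [FiniteDimensional F U]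
    (hU : finrank F U ≤ 3) {τ : ExteriorAlgebra F V} (hτ : τ ∈ wedge U U) :
    ∃ x ∈ U, ∃ y ∈ U, ι F x * ι F y = τ := by
  induction hτ using Submodule.mul_induction_on' with
  | mem_mul_mem _ hm _ hn =>
    obtain ⟨x, hx, rfl⟩ := hm
    obtain ⟨y, hy, rfl⟩ := hn
    exact ⟨x, hx, y, hy, rfl⟩
  | add _ _ _ _ ih ih' =>
    obtain ⟨x, hx, y, hy, rfl⟩ := ih
    obtain ⟨x', hx', y', hy', rfl⟩ := ih'
    exact exists_ι_mul_ι_eq_add hU hx hy hx' hy'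

lemma exists_eq_add_of_notMem_wedge_top {W : Submodule F V} (hW : finrank F (V ⧸ W) = 3)
    {κ : ExteriorAlgebra F V} (hκ : κ ∈ ⋀[F]^2 V) (hκW : κ ∉ wedge W ⊤) :
    ∃ ω ∈ wedge W W, ∃ w ∈ W, ∃ u₁ u₂ u₃ : V, W ⊔ Submodule.span F {u₁, u₂, u₃} = ⊤ ∧
      κ = ω + (ι F w * ι F u₁ + ι F u₂ * ι F u₃) := by
  obtain ⟨U, hWU⟩ := W.exists_isCompl
  have hU : finrank F U = 3 := (W.quotientEquivOfIsCompl U hWU).finrank_eq.symm.trans hW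
  have : FiniteDimensional F U := finite_of_finrank_eq_succ hU
  rw [← wedge_top_top, wedge_top_top_eq_sup hWU.sup_eq_top] at hκ
  obtain ⟨τ, hτ, σ, hσ, rfl⟩ := Submodule.mem_sup.1 hκ
  obtain ⟨u, hu, v, hv, rfl⟩ := exists_ι_mul_ι_eq_of_mem_wedge_self hU.le hσ
  have huv : LinearIndependent F ![u, v] :=
    ι_mul_ι_ne_zero_iff.1 fun h ↦ hκW (by rwa [h, add_zero])
  obtain ⟨c, rfl⟩ := exists_span_insert_eq (Submodule.span_le.2 (Set.pair_subset hu hv))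
    (by rw [hU, finrank_span_pair_eq_two_iff.2 huv])
  obtain ⟨ω, hω, w, hw, p, hp, q, hq, heq⟩ := exists_add_ι_mul_ι_eq hWU.sup_eq_top hτ
  exact ⟨ω, hω, w, hw, c, u + q, v - p,
    (sup_span_triple_add_eq hp hq).trans hWU.sup_eq_top, heq⟩

lemma exists_mem_notMem_wedge_top {W : Submodule F V} (hW : finrank F (V ⧸ W) = 3)
    {K : Submodule F (ExteriorAlgebra F V)} (hK2 : K ≤ ⋀[F]^2 V) (hWK : wedge W W ≤ K)
    (hdec : ∀ x y : V, ι F x * ι F y ∈ K → ι F x * ι F y ∈ wedge W W) (hnc : ¬K ≤ wedge W ⊤) :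
    ∃ w ∈ W, ∃ u₁ u₂ u₃ : V, w ≠ 0 ∧ W ⊔ Submodule.span F {u₁, u₂, u₃} = ⊤ ∧
      ι F w * ι F u₁ + ι F u₂ * ι F u₃ ∈ K ∧
      ι F w * ι F u₁ + ι F u₂ * ι F u₃ ∉ wedge W ⊤ := by
  have hWW : wedge W W ≤ wedge W ⊤ := wedge_mono le_rfl le_top
  obtain ⟨κ, hκ, hκW⟩ := SetLike.not_le_iff_exists.1 hnc
  obtain ⟨ω, hω, w, hw, u₁, u₂, u₃, htop, rfl⟩ :=
    exists_eq_add_of_notMem_wedge_top hW (hK2 hκ) hκW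
  have hρK : ι F w * ι F u₁ + ι F u₂ * ι F u₃ ∈ K := (add_mem_cancel_left (hWK hω)).1 hκ
  have hρW : ι F w * ι F u₁ + ι F u₂ * ι F u₃ ∉ wedge W ⊤ :=
    fun h ↦ hκW (add_mem (hWW hω) h)
  refine ⟨w, hw, u₁, u₂, u₃, ?_, htop, hρK, hρW⟩
  rintro rfl
  simp only [map_zero, zero_mul, zero_add] at hρK hρW
  exact hρW (hWW (hdec u₂ u₃ hρK))

/-- Decomposability is expressed by products `x ∧ y`, since in characteristic two every bivector
satisfies `γ ∧ γ = 0`. -/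
theorem stmt_13_general (hdim : finrank F V = 5) {K : Submodule F (ExteriorAlgebra F V)}
    (hK2 : K ≤ ⋀[F]^2 V) (hKdim : finrank F K = 2) {W : Submodule F V} (hW : finrank F W = 2)
    (hWK : wedge W W ≤ K) (hdec : ∀ x y : V, ι F x * ι F y ∈ K → ι F x * ι F y ∈ wedge W W)
    (hnc : ¬K ≤ wedge W ⊤) :
    ∃ w₁ w₂ u₁ u₂ u₃ : V,
      LinearIndependent F ![w₁, w₂, u₁, u₂, u₃] ∧
      Submodule.span F {w₁, w₂, u₁, u₂, u₃} = ⊤ ∧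
      W = Submodule.span F {w₁, w₂} ∧
      K = Submodule.span F {ι F w₁ * ι F w₂, ι F w₁ * ι F u₁ + ι F u₂ * ι F u₃} := by
  have : FiniteDimensional F V := finite_of_finrank_eq_succ hdim
  have hquot : finrank F (V ⧸ W) = 3 := by
    have := W.finrank_quotient_add_finrank
    omega
  obtain ⟨w₁, hw₁, u₁, u₂, u₃, hw₁0, hsup, hρK, hρW⟩ :=
    exists_mem_notMem_wedge_top hquot hK2 hWK hdec hnc
  obtain ⟨w₂, rfl⟩ : ∃ w₂, Submodule.span F {w₁, w₂} = W := by
    simpa only [Set.pair_comm w₁] using exists_span_insert_eq (s := {w₁}) (by simpa using hw₁)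
      (by rw [hW, finrank_span_singleton hw₁0])
  have htop : Submodule.span F {w₁, w₂, u₁, u₂, u₃} = ⊤ := by
    simpa only [← Submodule.span_union, Set.insert_union, Set.singleton_union] using hsup
  have hw₂ : w₂ ∈ Submodule.span F {w₁, w₂} := Submodule.subset_span (by simp)
  have hw₁w₂ : ι F w₁ * ι F w₂ ≠ 0 :=
    ι_mul_ι_ne_zero_iff.2 (finrank_span_pair_eq_two_iff.1 hW)
  have hindep : LinearIndependent F
      ![ι F w₁ * ι F w₂, ι F w₁ * ι F u₁ + ι F u₂ * ι F u₃] :=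
    (LinearIndependent.pair_iff' hw₁w₂).2 fun a ha ↦
      hρW (ha ▸ Submodule.smul_mem _ a (ι_mul_ι_mem_wedge hw₁ Submodule.mem_top))
  refine ⟨w₁, w₂, u₁, u₂, u₃, ?_, htop, rfl,
    (span_pair_eq_of_finrank_eq_two hKdim (hWK (ι_mul_ι_mem_wedge hw₁ hw₂)) hρK hindep).symm⟩
  exact linearIndependent_of_top_le_span_of_card_eq_finrank
    (by simp only [Matrix.range_cons, Matrix.range_empty, Set.union_empty, Set.singleton_union,
      htop, le_refl]) (by simp [hdim])

end Field

lemma wedge2_eq_wedge {V : Type*} [AddCommGroup V] [Module ℂ V] (W : Submodule ℂ V) :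
    wedge2 W = wedge W W :=
  le_antisymm
    (Submodule.span_le.2 fun _ ⟨_, h₁, _, h₂, hz⟩ ↦ hz ▸ ι_mul_ι_mem_wedge h₁ h₂)
    (wedge_le.2 fun a ha b hb ↦ Submodule.subset_span ⟨a, ha, b, hb, rfl⟩)

lemma wedgeWithAll_eq_wedge_top {V : Type*} [AddCommGroup V] [Module ℂ V] (W : Submodule ℂ V) :
    wedgeWithAll W = wedge W ⊤ :=
  le_antisymm
    (Submodule.span_le.2 fun _ ⟨_, hw, _, hz⟩ ↦ hz ▸ ι_mul_ι_mem_wedge hw Submodule.mem_top)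
    (wedge_le.2 fun a ha b _ ↦ Submodule.subset_span ⟨a, ha, b, rfl⟩)

/-- Let `V₀` be a 5-dimensional complex vector space and `K ⊂ ⋀²V₀` a
2-dimensional subspace.  Assume (i) there is a 2-dimensional subspace `W₀ ⊂ V₀` such that
the decomposable vectors of `K` (those `γ` with `γ∧γ = 0`) form exactly the line `⋀²W₀`,
and (ii) `K ⊄ W₀∧V₀`.  Then there is a basis `{w₁,w₂,u₁,u₂,u₃}` of `V₀` with
`W₀ = span(w₁,w₂)` and `K = span(w₁∧w₂, w₁∧u₁ + u₂∧u₃)`. -/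
theorem stmt_13 {V₀ : Type*} [AddCommGroup V₀] [Module ℂ V₀] [FiniteDimensional ℂ V₀]
    (hdim : finrank ℂ V₀ = 5)
    (K : Submodule ℂ (ExteriorAlgebra ℂ V₀))
    (hK2 : K ≤ ⋀[ℂ]^2 V₀) (hKdim : finrank ℂ K = 2)
    (W₀ : Submodule ℂ V₀) (hW₀ : finrank ℂ W₀ = 2)
    (hdec : {γ : ExteriorAlgebra ℂ V₀ | γ ∈ K ∧ γ * γ = 0} =
      (wedge2 W₀ : Set (ExteriorAlgebra ℂ V₀)))
    (hnc : ¬K ≤ wedgeWithAll W₀) :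
    ∃ w₁ w₂ u₁ u₂ u₃ : V₀,
      LinearIndependent ℂ ![w₁, w₂, u₁, u₂, u₃] ∧
      Submodule.span ℂ {w₁, w₂, u₁, u₂, u₃} = ⊤ ∧
      W₀ = Submodule.span ℂ {w₁, w₂} ∧
      K = Submodule.span ℂ
        {ι ℂ w₁ * ι ℂ w₂, ι ℂ w₁ * ι ℂ u₁ + ι ℂ u₂ * ι ℂ u₃} := by
  rw [wedge2_eq_wedge, Set.ext_iff] at hdec
  rw [wedgeWithAll_eq_wedge_top] at hnc
  exact stmt_13_general hdim hK2 hKdim hW₀ (fun γ hγ ↦ ((hdec γ).2 hγ).1)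
    (fun x y h ↦ (hdec _).1 ⟨h, ι_mul_ι_mul_self x y⟩) hnc
end

section
/- Every element z ∈ ℤ[√2] with norm N(z) = −1 (i.e. z = y + x√2 with y² − 2x² = −1) is of the form z = ε·(−1+√2)·(3+2√2)ⁿ for some sign ε ∈ {1,−1} and some integer n ∈ ℤ. -/
/-!
An element of norm `-1` is a unit, so it is an associate of `-1 + √2`; as both have norm `-1`, they
differ by a factor of norm `1`, that is, by a solution of the Pell equation `x² - 2y² = 1`. In such
a solution `x` is odd, so the least `x > 1` is `3`: the solution `(3, 2)` is fundamental, and the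
factor is `±(3 + 2√2)ⁿ`.
-/

/-- The fundamental unit `3 + 2√2` of `ℤ[√2]`. -/
def fundUnit : (ℤ√2)ˣ where
  val := ⟨3, 2⟩
  inv := ⟨3, -2⟩
  val_inv := by decide
  inv_val := by decide

open Pell

theorem val_toUnits_zpow {R : Type*} [Monoid R] [StarMul R] (U : unitary R) (n : ℤ) :
    ((Unitary.toUnits U ^ n : Rˣ) : R) = (U ^ n : unitary R) := by
  rw [← map_zpow, Unitary.val_toUnits_apply]

section

variable {d : ℤ}

theorem odd_solution₁_x_of_even (hd : Even d) (a : Solution₁ d) : Odd a.x := by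
  have hsq : Odd (a.x ^ 2) := a.prop_x ▸ odd_one.add_even (hd.mul_right _)
  exact (Int.odd_pow' two_ne_zero).mp hsq

theorem associated_of_isUnit_norm {u z : ℤ√d} (hu : IsUnit u.norm) (hz : IsUnit z.norm) :
    Associated u z := by
  rw [← Zsqrtd.isUnit_iff_norm_isUnit, ← associated_one_iff_isUnit] at hu hz
  exact hu.trans hz.symm

theorem exists_eq_mul_solution₁_of_associated (hd : ¬IsSquare d) {u z : ℤ√d}
    (h : Associated u z) (hnorm : z.norm = u.norm) : ∃ a : Solution₁ d, z = u * a := by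
  obtain ⟨v, rfl⟩ := h
  obtain rfl | hu := eq_or_ne u 0
  · exact ⟨1, by simp only [zero_mul]⟩
  have hu_norm : u.norm ≠ 0 :=
    mt (Zsqrtd.norm_eq_zero (fun n hn ↦ hd ⟨n, hn⟩) u).mp hu
  have hv_norm : (v : ℤ√d).norm = 1 := by
    rwa [Zsqrtd.norm_mul, mul_eq_left₀ hu_norm] at hnorm
  exact ⟨⟨v, Zsqrtd.norm_eq_one_iff_mem_unitary.mp hv_norm⟩, rfl⟩

theorem exists_eq_mul_zpow_or_neg_of_isFundamental {a : Solution₁ d} (ha : IsFundamental a)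
    {u z : ℤ√d} (h : Associated u z) (hnorm : z.norm = u.norm) :
    ∃ n : ℤ, z = u * (a ^ n : Solution₁ d) ∨ z = -(u * (a ^ n : Solution₁ d)) := by
  obtain ⟨b, rfl⟩ := exists_eq_mul_solution₁_of_associated ha.d_nonsquare h hnorm
  obtain ⟨n, rfl | rfl⟩ := ha.eq_zpow_or_neg_zpow b
  · exact ⟨n, .inl rfl⟩
  · exact ⟨n, .inr (mul_neg _ _)⟩

end

/-- The fundamental solution `(3, 2)` of the Pell equation `x² - 2y² = 1`; its image in the unit
group of `ℤ[√2]` is `fundUnit`. -/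
def fundSolution : Solution₁ 2 := .mk 3 2 (by norm_num)

theorem isFundamental_fundSolution : IsFundamental fundSolution := by
  refine ⟨by decide, by decide, fun {b} hb ↦ ?_⟩
  obtain ⟨k, hk⟩ := odd_solution₁_x_of_even even_two b
  change 3 ≤ b.x
  omega

theorem coe_fundSolution_zpow (n : ℤ) :
    ((fundSolution ^ n : Solution₁ 2) : ℤ√2) = ((fundUnit ^ n : (ℤ√2)ˣ) : ℤ√2) := by
  have toUnits_eq : Unitary.toUnits fundSolution = fundUnit := Units.ext rfl
  exact toUnits_eq ▸ (val_toUnits_zpow fundSolution n).symm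

/-- Every element of `ℤ[√2]` of norm `−1` is of the form
`ε·(−1+√2)·(3+2√2)ⁿ` with `ε ∈ {1, −1}` and `n ∈ ℤ`. -/
theorem stmt_14 (z : ℤ√2) (hz : z.norm = -1) :
    ∃ (ε : ℤ√2) (n : ℤ), (ε = 1 ∨ ε = -1) ∧
      z = ε * (⟨-1, 1⟩ : ℤ√2) * ((fundUnit ^ n : (ℤ√2)ˣ) : ℤ√2) := by
  have hu : (⟨-1, 1⟩ : ℤ√2).norm = -1 := by decide
  have h : Associated ⟨-1, 1⟩ z :=
    associated_of_isUnit_norm (hu ▸ isUnit_neg_one) (hz ▸ isUnit_neg_one)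
  obtain ⟨n, hn⟩ :=
    exists_eq_mul_zpow_or_neg_of_isFundamental isFundamental_fundSolution h (hz.trans hu.symm)
  rw [coe_fundSolution_zpow] at hn
  obtain hn | hn := hn
  · exact ⟨1, n, .inl rfl, by rw [hn, one_mul]⟩
  · exact ⟨-1, n, .inr rfl, by rw [hn, neg_one_mul, neg_mul]⟩
end

section
/- Define the symmetric ℤ-bilinear form b on ℤ[√2] by b(z,w) = −(z·w̄ + z̄·w). For n ∈ ℤ let α_n = −(3−2√2)ⁿ ∈ ℤ[√2]. Then b(α_n, −1+√2) > 0 if n > 0, and b(−α_n, −1+√2) > 0 if n ≤ 0. -/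
/-!
For `z = x + y√2` one has `b(z, −1+√2) = 2(x + 2y)`. The power `(3 − 2√2)ⁿ = (3 + 2√2)⁻ⁿ` solves the
Pell equation `x² − 2y² = 1` with `x > 0`, and its `y` has the sign of `−n`. If `y ≥ 0`, then
`x + 2y > 0`. If `y < 0`, then `y² ≥ 1`, so `x² = 1 + 2y² < (2y)²` and `x + 2y < 0`.
-/

/-- The unit `3 − 2√2` of `ℤ[√2]` (inverse of `3 + 2√2`). -/
def unit32 : (ℤ√2)ˣ where
  val := ⟨3, -2⟩
  inv := ⟨3, 2⟩
  val_inv := by decide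
  inv_val := by decide

/-- The symmetric ℤ-bilinear form `b(z,w) = −(z·w̄ + z̄·w)` on `ℤ[√2]`
(its value lies in `ℤ ⊆ ℤ[√2]`; we record its real part). -/
def bform (z w : ℤ√2) : ℤ := (-(z * star w + star z * w)).re

/-- `α_n = −(3−2√2)ⁿ`. -/
def alphaN (n : ℤ) : ℤ√2 := -((unit32 ^ n : (ℤ√2)ˣ) : ℤ√2)

section Pell

variable {d c : ℤ} {a : Pell.Solution₁ d}

theorem pell_x_add_mul_y_neg (hc : 0 ≤ c) (hdc : d + 1 < c ^ 2) (hy : a.y < 0) :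
    a.x + c * a.y < 0 := by
  have sq_y_pos : 0 < a.y ^ 2 := sq_pos_of_neg hy
  have sq_x_lt : a.x ^ 2 < (-(c * a.y)) ^ 2 :=
    calc a.x ^ 2 = 1 + d * a.y ^ 2 := a.prop_x
      _ ≤ (d + 1) * a.y ^ 2 := by linarith
      _ < c ^ 2 * a.y ^ 2 := mul_lt_mul_of_pos_right hdc sq_y_pos
      _ = (-(c * a.y)) ^ 2 := by ring
  have neg_mul_nonneg : 0 ≤ -(c * a.y) :=
    neg_nonneg.mpr (mul_nonpos_of_nonneg_of_nonpos hc hy.le)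
  linarith [lt_of_pow_lt_pow_left₀ 2 neg_mul_nonneg sq_x_lt]

theorem pell_zpow_x_add_mul_y_neg (hax : 0 < a.x) (hay : 0 < a.y) (hc : 0 ≤ c)
    (hdc : d + 1 < c ^ 2) {n : ℤ} (hn : n < 0) : (a ^ n).x + c * (a ^ n).y < 0 := by
  have y_neg : (a ^ n).y < 0 := by
    rwa [← Int.sign_eq_neg_one_iff_neg,
      Pell.Solution₁.sign_y_zpow_eq_sign_of_x_pos_of_y_pos hax hay, Int.sign_eq_neg_one_iff_neg]
  exact pell_x_add_mul_y_neg hc hdc y_neg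

theorem pell_zpow_x_add_mul_y_pos (hax : 0 < a.x) (hay : 0 < a.y) (hc : 0 ≤ c) {n : ℤ}
    (hn : 0 ≤ n) : 0 < (a ^ n).x + c * (a ^ n).y := by
  have y_nonneg : 0 ≤ (a ^ n).y := by
    rwa [← Int.sign_nonneg_iff,
      Pell.Solution₁.sign_y_zpow_eq_sign_of_x_pos_of_y_pos hax hay, Int.sign_nonneg_iff]
  exact add_pos_of_pos_of_nonneg (Pell.Solution₁.x_zpow_pos hax n) (mul_nonneg hc y_nonneg)

end Pell

/-- The solution `(x, y) = (3, 2)` of the Pell equation `x² − 2y² = 1`, standing for `3 + 2√2`; it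
is the inverse of `unit32`, chosen because both its coordinates are positive. -/
def pellThreeTwo : Pell.Solution₁ 2 := .mk 3 2 (by norm_num)

theorem pellThreeTwo_x_pos : 0 < pellThreeTwo.x := by decide

theorem pellThreeTwo_y_pos : 0 < pellThreeTwo.y := by decide

theorem unit32_eq_toUnits_inv :
    unit32 = Unitary.toUnits (R := ℤ√2) (pellThreeTwo⁻¹ : Pell.Solution₁ 2) :=
  Units.ext rfl

theorem coe_unit32_zpow (n : ℤ) :
    ((unit32 ^ n : (ℤ√2)ˣ) : ℤ√2) = (pellThreeTwo ^ (-n) : Pell.Solution₁ 2) := by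
  rw [unit32_eq_toUnits_inv, zpow_neg, ← inv_zpow]
  exact congrArg Units.val (map_zpow (Unitary.toUnits (R := ℤ√2)) pellThreeTwo⁻¹ n).symm

theorem bform_neg_one_one (z : ℤ√2) : bform z ⟨-1, 1⟩ = 2 * (z.re + 2 * z.im) := by
  simp only [bform, Zsqrtd.re_neg, Zsqrtd.re_add, Zsqrtd.re_mul, Zsqrtd.re_star, Zsqrtd.im_star]
  ring

theorem bform_neg_left (z w : ℤ√2) : bform (-z) w = -bform z w := by
  simp only [bform, star_neg, neg_mul, ← neg_add, Zsqrtd.re_neg]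

theorem bform_alphaN (n : ℤ) : bform (alphaN n) ⟨-1, 1⟩ =
    -(2 * ((pellThreeTwo ^ (-n)).x + 2 * (pellThreeTwo ^ (-n)).y)) := by
  rw [alphaN, bform_neg_left, bform_neg_one_one, coe_unit32_zpow]
  rfl

/-- `b(α_n, −1+√2) > 0` if `n > 0`, and `b(−α_n, −1+√2) > 0` if `n ≤ 0`. -/
theorem stmt_15 (n : ℤ) :
    (0 < n → 0 < bform (alphaN n) ⟨-1, 1⟩) ∧
      (n ≤ 0 → 0 < bform (-alphaN n) ⟨-1, 1⟩) := by
  rw [bform_neg_left, bform_alphaN, neg_neg]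
  constructor
  · intro hn
    have x_add_neg : (pellThreeTwo ^ (-n)).x + 2 * (pellThreeTwo ^ (-n)).y < 0 :=
      pell_zpow_x_add_mul_y_neg pellThreeTwo_x_pos pellThreeTwo_y_pos (by norm_num) (by norm_num)
        (neg_lt_zero.mpr hn)
    linarith
  · intro hn
    have x_add_pos : 0 < (pellThreeTwo ^ (-n)).x + 2 * (pellThreeTwo ^ (-n)).y :=
      pell_zpow_x_add_mul_y_pos pellThreeTwo_x_pos pellThreeTwo_y_pos (by norm_num)
        (neg_nonneg.mpr hn)
    linarith
end
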